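/- There exist five quintuples of real numbers (u0, u1, u2, x2, x3) satisfying g0 = g1 = g2 = g3 = g4 = 0, one in each of the following boxes: (i) 0.26 < u0 < 0.27, 0.21 < u1 < 0.22, 0.11 < u2 < 0.12, 1.00 < x2 < 1.01, 0.255 < x3 < 0.256; (ii) 0.54 < u0 < 0.55, 0.28 < u1 < 0.29, 1.17 < u2 < 1.18, 1.02 < x2 < 1.03, 0.49 < x3 < 0.50; (iii) 0.72 < u0 < 0.73, 0.14 < u1 < 0.15, 0.11 < u2 < 0.12, 0.49 < x2 < 0.50, 1.10 < x3 < 1.11; (iv) 1.36 < u0 < 1.37, 1.44 < u1 < 1.45, 0.15 < u2 < 0.16, 0.95 < x2 < 0.96, 1.38 < x3 < 1.39; (v) 2.49 < u0 < 2.50, 0.25 < u1 < 0.26, 0.17 < u2 < 0.18, 1.74 < x2 < 1.75, 2.47 < x3 < 2.48. (These give five non-isometric non-naturally reductive left-invariant Einstein metrics on F4.) -/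

import Mathlib

noncomputable def g0 (u0 u1 u2 x2 x3 : ℝ) : ℝ :=
  2*u0*u1*x2 ^ 2*x3 ^ 2 + 3*u0*u1*x2 ^ 2 + 4*u0*u1*x3 ^ 2 - 6*u1 ^ 2*x2 ^ 2*x3 ^ 2 - u1 ^ 2*x2 ^ 2 - 2*x2 ^ 2*x3 ^ 2

noncomputable def g1 (u0 u1 u2 x2 x3 : ℝ) : ℝ :=
  12*u1 ^ 2*u2*x2 ^ 2*x3 ^ 2 + 2*u1 ^ 2*u2*x2 ^ 2 - 10*u1*u2 ^ 2*x2 ^ 2*x3 ^ 2 - 5*u1*u2 ^ 2*x3 ^ 2 - 3*u1*x2 ^ 2*x3 ^ 2 + 4*u2*x2 ^ 2*x3 ^ 2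

noncomputable def g2 (u0 u1 u2 x2 x3 : ℝ) : ℝ :=
  u0*u2*x2 ^ 2*x3 + 9*u1*u2*x2 ^ 2*x3 + 50*u2 ^ 2*x2 ^ 2*x3 + 15*u2 ^ 2*x3 + 18*u2*x2 ^ 3*x3 + 6*u2*x2 ^ 3 - 108*u2*x2 ^ 2*x3 + 6*u2*x2*x3 ^ 2 - 6*u2*x2 + 9*x2 ^ 2*x3

noncomputable def g3 (u0 u1 u2 x2 x3 : ℝ) : ℝ :=
  -u0*x2 ^ 2*x3 + 4*u0*x3 - 9*u1*x2 ^ 2*x3 - 20*u2*x2 ^ 2*x3 + 20*u2*x3 - 36*x2 ^ 3*x3 - 18*x2 ^ 3 + 108*x2 ^ 2*x3 + 6*x2*x3 ^ 2 - 72*x2*x3 + 18*x2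

noncomputable def g4 (u0 u1 u2 x2 x3 : ℝ) : ℝ :=
  9*u0*x2 ^ 2 - 4*u0*x3 ^ 2 + 9*u1*x2 ^ 2 - 20*u2*x3 ^ 2 + 18*x2 ^ 3*x3 ^ 2 + 48*x2 ^ 3*x3 - 108*x2 ^ 2*x3 - 48*x2*x3 ^ 3 + 72*x2*x3 ^ 2 + 24*x2*x3

/-!
Each solution is found by the Krawczyk test, a computable form of the Newton–Kantorovich theorem.
Let `c` be a numerical zero of `f : ℝⁿ → ℝⁿ`, `J` the Jacobian of `f` at `c`, and `A` an approximate
inverse of `J`. If `f` differs from its linearization at `c` by a map with small Lipschitz constant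
on a ball around `c`, then `x ↦ A (f x)` is a small Lipschitz perturbation of the identity there,
hence it covers a ball around `A (f c)`, and this ball contains `0` because `f c` is tiny. Moreover
`A * J` is close to `1`, so `A` is invertible and a zero of `A ∘ f` is a zero of `f`.

The Lipschitz constant is obtained by rational arithmetic: first-order Taylor models with a
Lipschitz bound on the nonlinear part can be added and multiplied, so they are computed for a
polynomial by recursion on its expression.
-/

open Metric Matrix
open scoped NNReal

theorem exists_mem_closedBall_eq_zero_of_approximatesLinearOn_id {E : Type*}
    [NormedAddCommGroup E] [NormedSpace ℝ E] [CompleteSpace E] {h : E → E} {c : E} {r : ℝ}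
    {K : ℝ≥0} (hr : 0 ≤ r)
    (happrox : ApproximatesLinearOn h (ContinuousLinearMap.id ℝ E) (closedBall c r) K)
    (hc : ‖h c‖ ≤ (1 - K) * r) : ∃ x ∈ closedBall c r, h x = 0 := by
  let idInverse : (ContinuousLinearMap.id ℝ E).NonlinearRightInverse :=
    { toFun := id, nnnorm := 1, bound' := fun y ↦ by simp, right_inv' := fun y ↦ rfl }
  refine happrox.surjOn_closedBall_of_nonlinearRightInverse idInverse hr subset_rfl ?_
  simpa [idInverse] using hc

section Krawczyk

variable {ι : Type*} [Fintype ι]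

theorem abs_dotProduct_le_sum_abs_mul_norm (v w : ι → ℝ) : |v ⬝ᵥ w| ≤ (∑ i, |v i|) * ‖w‖ :=
  calc |v ⬝ᵥ w| ≤ ∑ i, |v i * w i| := Finset.abs_sum_le_sum_abs _ _
    _ ≤ ∑ i, |v i| * ‖w‖ := by
      gcongr with i
      rw [abs_mul]
      gcongr
      exact norm_le_pi_norm w i
    _ = (∑ i, |v i|) * ‖w‖ := (Finset.sum_mul ..).symm

variable [DecidableEq ι]

theorem isUnit_of_sum_abs_one_sub_mul_lt_one {A J : Matrix ι ι ℝ}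
    (h : ∀ i, ∑ k, |(1 - A * J) i k| < 1) : IsUnit A := by
  have hAJ : (A * J).det ≠ 0 := by
    refine det_ne_zero_of_sum_row_lt_diag fun i ↦ ?_
    have hdiag := Finset.add_sum_erase Finset.univ (fun k ↦ |(1 - A * J) i k|) (Finset.mem_univ i)
    have hoff : ∑ k ∈ Finset.univ.erase i, |(1 - A * J) i k| =
        ∑ k ∈ Finset.univ.erase i, ‖(A * J) i k‖ :=
      Finset.sum_congr rfl fun k hk ↦ by
        rw [Matrix.sub_apply, one_apply_ne (Finset.ne_of_mem_erase hk).symm, zero_sub, abs_neg,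
          Real.norm_eq_abs]
    rw [Matrix.sub_apply, one_apply_eq, hoff] at hdiag
    have htri := abs_sub_abs_le_abs_sub 1 ((A * J) i i)
    rw [abs_one] at htri
    rw [Real.norm_eq_abs]
    linarith [h i]
  exact isUnit_of_mul_isUnit_left ((isUnit_iff_isUnit_det _).2 hAJ.isUnit)

theorem approximatesLinearOn_mulVec_id {f : (ι → ℝ) → ι → ℝ} {s : Set (ι → ℝ)}
    {A J : Matrix ι ι ℝ} {L : ι → ℝ} {K : ℝ≥0}
    (happrox : ∀ x ∈ s, ∀ y ∈ s, ∀ j, |(f x - f y - J *ᵥ (x - y)) j| ≤ L j * ‖x - y‖)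
    (hK : ∀ i, ∑ k, |(1 - A * J) i k| + ∑ j, |A i j| * L j ≤ K) :
    ApproximatesLinearOn (fun x ↦ A *ᵥ f x) (ContinuousLinearMap.id ℝ (ι → ℝ)) s K := by
  intro x hx y hy
  rw [pi_norm_le_iff_of_nonneg (by positivity)]
  intro i
  have hsplit : A *ᵥ f x - A *ᵥ f y - (x - y) =
      A *ᵥ (f x - f y - J *ᵥ (x - y)) - (1 - A * J) *ᵥ (x - y) := by
    simp only [mulVec_sub, sub_mulVec, one_mulVec, mulVec_mulVec]
    abel
  have hremainder : |(A *ᵥ (f x - f y - J *ᵥ (x - y))) i| ≤ (∑ j, |A i j| * L j) * ‖x - y‖ :=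
    calc |(A *ᵥ (f x - f y - J *ᵥ (x - y))) i|
        ≤ ∑ j, |A i j * (f x - f y - J *ᵥ (x - y)) j| := Finset.abs_sum_le_sum_abs _ _
      _ ≤ ∑ j, |A i j| * (L j * ‖x - y‖) := by
        gcongr with j
        rw [abs_mul]
        gcongr
        exact happrox x hx y hy j
      _ = (∑ j, |A i j| * L j) * ‖x - y‖ := by simp only [Finset.sum_mul, mul_assoc]
  calc ‖(A *ᵥ f x - A *ᵥ f y - (x - y)) i‖
      ≤ |(A *ᵥ (f x - f y - J *ᵥ (x - y))) i| + |((1 - A * J) *ᵥ (x - y)) i| := by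
        rw [hsplit]
        exact abs_sub _ _
    _ ≤ (∑ j, |A i j| * L j) * ‖x - y‖ + (∑ k, |(1 - A * J) i k|) * ‖x - y‖ :=
        add_le_add hremainder (abs_dotProduct_le_sum_abs_mul_norm _ _)
    _ ≤ K * ‖x - y‖ := by
        rw [← add_mul, add_comm]
        gcongr
        exact hK i

theorem exists_zero_of_krawczyk {f : (ι → ℝ) → ι → ℝ} {c : ι → ℝ} {r : ℝ}
    {A J : Matrix ι ι ℝ} {L : ι → ℝ} {K : ℝ≥0} (hr : 0 ≤ r) (hK : K < 1) (hL : ∀ j, 0 ≤ L j)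
    (happrox : ∀ x ∈ closedBall c r, ∀ y ∈ closedBall c r, ∀ j,
      |(f x - f y - J *ᵥ (x - y)) j| ≤ L j * ‖x - y‖)
    (hcontract : ∀ i, ∑ k, |(1 - A * J) i k| + ∑ j, |A i j| * L j ≤ K)
    (hcenter : ∀ i, |(A *ᵥ f c) i| ≤ (1 - K) * r) : ∃ x ∈ closedBall c r, f x = 0 := by
  have hradius : 0 ≤ (1 - K) * r := mul_nonneg (sub_nonneg.2 (by exact_mod_cast hK.le)) hr
  obtain ⟨x, hx, hAfx⟩ := exists_mem_closedBall_eq_zero_of_approximatesLinearOn_id hr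
    (approximatesLinearOn_mulVec_id happrox hcontract)
    ((pi_norm_le_iff_of_nonneg hradius).2 hcenter)
  have hA : IsUnit A := isUnit_of_sum_abs_one_sub_mul_lt_one (J := J) fun i ↦
    calc ∑ k, |(1 - A * J) i k| ≤ ∑ k, |(1 - A * J) i k| + ∑ j, |A i j| * L j :=
          le_add_of_nonneg_right (Finset.sum_nonneg fun j _ ↦ mul_nonneg (abs_nonneg _) (hL j))
      _ ≤ K := hcontract i
      _ < 1 := by exact_mod_cast hK
  exact ⟨x, hx, mulVec_injective_of_isUnit hA (hAfx.trans (mulVec_zero A).symm)⟩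

end Krawczyk

/-- The numerical part of a first-order Taylor model of a function of `ι` variables at a point:
its value, its gradient, and a Lipschitz constant for the difference between the function and its
linearization. The entries are rational so that models can be computed by the kernel. -/
structure TaylorModel (ι : Type*) where
  value : ℚ
  gradient : ι → ℚ
  remainder : ℚ

namespace TaylorModel

variable {ι : Type*}

/-- The Taylor model of a constant function. -/
def const (q : ℚ) : TaylorModel ι := ⟨q, fun _ ↦ 0, 0⟩

/-- The Taylor model at `c` of the `i`-th coordinate function. -/
def coord [DecidableEq ι] (c : ι → ℚ) (i : ι) : TaylorModel ι :=
  ⟨c i, fun j ↦ if i = j then 1 else 0, 0⟩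

/-- The Taylor model of a sum. -/
def add (s t : TaylorModel ι) : TaylorModel ι :=
  ⟨s.value + t.value, fun i ↦ s.gradient i + t.gradient i, s.remainder + t.remainder⟩

/-- The Jacobian matrix at the base point of a system of functions with Taylor models `t`. -/
def jacobian {κ : Type*} (t : κ → TaylorModel ι) : Matrix κ ι ℚ := of fun i ↦ (t i).gradient

variable [Fintype ι]

/-- A Lipschitz constant, for the sup norm, of every function with the given Taylor model. -/
def lipschitzConst (t : TaylorModel ι) : ℚ := ∑ i, |t.gradient i| + t.remainder

/-- The Taylor model, on a ball of radius `r`, of a product. -/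
def mul (r : ℚ) (s t : TaylorModel ι) : TaylorModel ι where
  value := s.value * t.value
  gradient i := s.value * t.gradient i + t.value * s.gradient i
  remainder := |s.value| * t.remainder + |t.value| * s.remainder +
    2 * r * s.lipschitzConst * t.lipschitzConst

/-- `t.Encloses c r f` says that `t` is a Taylor model of `f` at `c`, valid on the closed ball of
radius `r` for the sup norm. -/
structure Encloses (t : TaylorModel ι) (c : ι → ℝ) (r : ℝ) (f : (ι → ℝ) → ℝ) : Prop where
  value_eq : f c = t.value
  remainder_nonneg : 0 ≤ t.remainder
  abs_sub_le : ∀ x ∈ closedBall c r, ∀ y ∈ closedBall c r,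
    |f x - f y - (fun i ↦ (t.gradient i : ℝ)) ⬝ᵥ (x - y)| ≤ t.remainder * ‖x - y‖

theorem encloses_const (c : ι → ℝ) (r : ℝ) (q : ℚ) : (const q).Encloses c r fun _ ↦ q := by
  constructor <;> simp [const, dotProduct]

theorem encloses_coord [DecidableEq ι] (c : ι → ℚ) (r : ℝ) (i : ι) :
    (coord c i).Encloses (fun j ↦ c j) r fun x ↦ x i := by
  constructor <;> simp [coord, dotProduct, apply_ite]

variable {c : ι → ℝ} {f g : (ι → ℝ) → ℝ} {s t : TaylorModel ι}

theorem Encloses.add {r : ℝ} (hf : s.Encloses c r f) (hg : t.Encloses c r g) :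
    (s.add t).Encloses c r fun x ↦ f x + g x where
  value_eq := by simp [TaylorModel.add, hf.value_eq, hg.value_eq]
  remainder_nonneg := add_nonneg hf.remainder_nonneg hg.remainder_nonneg
  abs_sub_le x hx y hy := by
    set ℓ : ℝ := (fun i ↦ (s.gradient i : ℝ)) ⬝ᵥ (x - y)
    set m : ℝ := (fun i ↦ (t.gradient i : ℝ)) ⬝ᵥ (x - y)
    have hgradient : (fun i ↦ ((s.add t).gradient i : ℝ)) ⬝ᵥ (x - y) = ℓ + m := by
      simp only [TaylorModel.add, dotProduct, ℓ, m, Rat.cast_add, add_mul, Finset.sum_add_distrib]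
    rw [hgradient]
    calc |f x + g x - (f y + g y) - (ℓ + m)|
        = |(f x - f y - ℓ) + (g x - g y - m)| := by ring_nf
      _ ≤ |f x - f y - ℓ| + |g x - g y - m| := abs_add_le _ _
      _ ≤ s.remainder * ‖x - y‖ + t.remainder * ‖x - y‖ :=
        add_le_add (hf.abs_sub_le x hx y hy) (hg.abs_sub_le x hx y hy)
      _ = (s.add t).remainder * ‖x - y‖ := by simp only [TaylorModel.add, Rat.cast_add, add_mul]

theorem Encloses.lipschitzConst_nonneg {r : ℝ} (hf : t.Encloses c r f) : 0 ≤ t.lipschitzConst :=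
  add_nonneg (Finset.sum_nonneg fun _ _ ↦ abs_nonneg _) hf.remainder_nonneg

theorem Encloses.abs_sub_le_lipschitzConst {r : ℝ} (hf : t.Encloses c r f) {x y : ι → ℝ}
    (hx : x ∈ closedBall c r) (hy : y ∈ closedBall c r) :
    |f x - f y| ≤ t.lipschitzConst * ‖x - y‖ := by
  set ℓ : ℝ := (fun i ↦ (t.gradient i : ℝ)) ⬝ᵥ (x - y)
  calc |f x - f y| = |ℓ + (f x - f y - ℓ)| := by rw [add_sub_cancel]
    _ ≤ |ℓ| + |f x - f y - ℓ| := abs_add_le _ _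
    _ ≤ (∑ i, |(t.gradient i : ℝ)|) * ‖x - y‖ + t.remainder * ‖x - y‖ :=
      add_le_add (abs_dotProduct_le_sum_abs_mul_norm _ _) (hf.abs_sub_le x hx y hy)
    _ = t.lipschitzConst * ‖x - y‖ := by simp [lipschitzConst, add_mul]

theorem Encloses.abs_sub_center_le {r : ℝ} (hr : 0 ≤ r) (hf : t.Encloses c r f) {x : ι → ℝ}
    (hx : x ∈ closedBall c r) : |f x - f c| ≤ t.lipschitzConst * r := by
  refine (hf.abs_sub_le_lipschitzConst hx (mem_closedBall_self hr)).trans ?_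
  have := hf.lipschitzConst_nonneg
  gcongr
  exact mem_closedBall_iff_norm.1 hx

theorem Encloses.abs_deviation_mul_sub_le {r : ℝ} (hr : 0 ≤ r) (hf : s.Encloses c r f)
    (hg : t.Encloses c r g) {x y : ι → ℝ} (hx : x ∈ closedBall c r) (hy : y ∈ closedBall c r) :
    |(f x - f c) * (g x - g c) - (f y - f c) * (g y - g c)| ≤
      2 * r * s.lipschitzConst * t.lipschitzConst * ‖x - y‖ := by
  have hs : (0 : ℝ) ≤ s.lipschitzConst := by exact_mod_cast hf.lipschitzConst_nonneg
  have ht : (0 : ℝ) ≤ t.lipschitzConst := by exact_mod_cast hg.lipschitzConst_nonneg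
  calc |(f x - f c) * (g x - g c) - (f y - f c) * (g y - g c)|
      = |(f x - f c) * (g x - g y) + (f x - f y) * (g y - g c)| := by ring_nf
    _ ≤ |f x - f c| * |g x - g y| + |f x - f y| * |g y - g c| := by
      simpa only [abs_mul] using
        abs_add_le ((f x - f c) * (g x - g y)) ((f x - f y) * (g y - g c))
    _ ≤ s.lipschitzConst * r * (t.lipschitzConst * ‖x - y‖) +
        s.lipschitzConst * ‖x - y‖ * (t.lipschitzConst * r) := by
      gcongr
      exacts [hf.abs_sub_center_le hr hx, hg.abs_sub_le_lipschitzConst hx hy,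
        hf.abs_sub_le_lipschitzConst hx hy, hg.abs_sub_center_le hr hy]
    _ = 2 * r * s.lipschitzConst * t.lipschitzConst * ‖x - y‖ := by ring

theorem Encloses.mul {r : ℚ} (hr : 0 ≤ r) (hf : s.Encloses c r f) (hg : t.Encloses c r g) :
    (s.mul r t).Encloses c r fun x ↦ f x * g x where
  value_eq := by simp [TaylorModel.mul, hf.value_eq, hg.value_eq]
  remainder_nonneg := by
    have := hf.remainder_nonneg
    have := hg.remainder_nonneg
    have := hf.lipschitzConst_nonneg
    have := hg.lipschitzConst_nonneg
    simp only [TaylorModel.mul]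
    positivity
  abs_sub_le x hx y hy := by
    set ℓ : ℝ := (fun i ↦ (s.gradient i : ℝ)) ⬝ᵥ (x - y)
    set m : ℝ := (fun i ↦ (t.gradient i : ℝ)) ⬝ᵥ (x - y)
    have hgradient : (fun i ↦ ((s.mul r t).gradient i : ℝ)) ⬝ᵥ (x - y) = f c * m + g c * ℓ := by
      simp only [TaylorModel.mul, dotProduct, ℓ, m, Finset.mul_sum, ← Finset.sum_add_distrib,
        hf.value_eq, hg.value_eq]
      exact Finset.sum_congr rfl fun i _ ↦ by push_cast; ring
    rw [hgradient]
    calc |f x * g x - f y * g y - (f c * m + g c * ℓ)|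
        = |f c * (g x - g y - m) + g c * (f x - f y - ℓ) +
            ((f x - f c) * (g x - g c) - (f y - f c) * (g y - g c))| := by ring_nf
      _ ≤ |f c| * |g x - g y - m| + |g c| * |f x - f y - ℓ| +
            |(f x - f c) * (g x - g c) - (f y - f c) * (g y - g c)| := by
        simpa only [abs_mul] using abs_add_three (f c * (g x - g y - m)) (g c * (f x - f y - ℓ)) _
      _ ≤ |f c| * (t.remainder * ‖x - y‖) + |g c| * (s.remainder * ‖x - y‖) +
            2 * r * s.lipschitzConst * t.lipschitzConst * ‖x - y‖ := by
        gcongr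
        exacts [hg.abs_sub_le x hx y hy, hf.abs_sub_le x hx y hy,
          hf.abs_deviation_mul_sub_le (by exact_mod_cast hr) hg hx hy]
      _ = (s.mul r t).remainder * ‖x - y‖ := by
        simp only [TaylorModel.mul, hf.value_eq, hg.value_eq]
        push_cast
        ring

variable [DecidableEq ι]

/-- The Krawczyk test, with contraction constant `1 / 2`, for a square system of functions with
Taylor models `t` on a ball of radius `r`. The preconditioner `A` is meant to be an approximate
inverse of the Jacobian. -/
def KrawczykTest (t : ι → TaylorModel ι) (r : ℚ) (A : Matrix ι ι ℚ) : Prop :=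
  ∀ i, |∑ j, A i j * (t j).value| ≤ r / 2 ∧
    ∑ k, |(1 - A * jacobian t) i k| + ∑ j, |A i j| * (t j).remainder ≤ 1 / 2

instance (t : ι → TaylorModel ι) (r : ℚ) (A : Matrix ι ι ℚ) : Decidable (KrawczykTest t r A) :=
  inferInstanceAs (Decidable (∀ _, _))

theorem KrawczykTest.exists_zero {t : ι → TaylorModel ι} {r : ℚ} {A : Matrix ι ι ℚ}
    {f : ι → (ι → ℝ) → ℝ} (h : KrawczykTest t r A) (hr : 0 ≤ r)
    (hf : ∀ i, (t i).Encloses c r (f i)) : ∃ x ∈ closedBall c r, ∀ i, f i x = 0 := by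
  let toReal := (Rat.castHom ℝ).mapMatrix (m := ι)
  have hdefect : 1 - toReal A * toReal (jacobian t) = toReal (1 - A * jacobian t) := by
    rw [map_sub, map_one, map_mul]
  have hcontract (i : ι) : ∑ k, |(1 - toReal A * toReal (jacobian t)) i k| +
      ∑ j, |toReal A i j| * ((t j).remainder : ℝ) ≤ (1 / 2 : ℝ≥0) := by
    have hle := (Rat.cast_le (K := ℝ)).2 (h i).2
    push_cast at hle
    rw [hdefect]
    exact hle
  have hcenter (i : ι) : |(toReal A *ᵥ fun j ↦ f j c) i| ≤ (1 - (1 / 2 : ℝ≥0)) * (r : ℝ) := by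
    have hvalue : (toReal A *ᵥ fun j ↦ f j c) i = (∑ j, A i j * (t j).value : ℚ) := by
      simp [toReal, mulVec, dotProduct, (hf _).value_eq]
    have hle := (Rat.cast_le (K := ℝ)).2 (h i).1
    push_cast at hvalue hle ⊢
    rw [hvalue]
    linarith
  obtain ⟨x, hx, hzero⟩ := exists_zero_of_krawczyk (f := fun x i ↦ f i x) (c := c)
    (by exact_mod_cast hr) (by norm_num) (fun i ↦ by exact_mod_cast (hf i).remainder_nonneg)
    (fun x hx y hy i ↦ (hf i).abs_sub_le x hx y hy) hcontract hcenter
  exact ⟨x, hx, congrFun hzero⟩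

end TaylorModel

/-- Polynomial expressions with rational coefficients in variables indexed by `ι`. Unlike
`MvPolynomial`, they can be evaluated by the kernel. -/
inductive PolyExpr (ι : Type*) where
  | const (q : ℚ) : PolyExpr ι
  | var (i : ι) : PolyExpr ι
  | add (p q : PolyExpr ι) : PolyExpr ι
  | mul (p q : PolyExpr ι) : PolyExpr ι

namespace PolyExpr

variable {ι : Type*}

instance (n : ℕ) : OfNat (PolyExpr ι) n := ⟨const n⟩
instance : Add (PolyExpr ι) := ⟨add⟩
instance : Mul (PolyExpr ι) := ⟨mul⟩
instance : Neg (PolyExpr ι) := ⟨fun p ↦ const (-1) * p⟩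
instance : Sub (PolyExpr ι) := ⟨fun p q ↦ p + -q⟩
instance : Pow (PolyExpr ι) ℕ := ⟨fun p n ↦ n.rec 1 fun _ q ↦ q * p⟩

/-- The value of a polynomial expression at a real point. -/
def eval (x : ι → ℝ) : PolyExpr ι → ℝ
  | const q => q
  | var i => x i
  | add p q => p.eval x + q.eval x
  | mul p q => p.eval x * q.eval x

section eval

variable (x : ι → ℝ) (p q : PolyExpr ι)

@[simp]
theorem eval_ofNat (n : ℕ) [n.AtLeastTwo] : eval x (ofNat(n) : PolyExpr ι) = ofNat(n) :=
  Rat.cast_natCast n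

@[simp]
theorem eval_var (i : ι) : eval x (var i) = x i := rfl

@[simp]
theorem eval_add : eval x (p + q) = eval x p + eval x q := rfl

@[simp]
theorem eval_mul : eval x (p * q) = eval x p * eval x q := rfl

@[simp]
theorem eval_neg : eval x (-p) = -eval x p := by
  change ((-1 : ℚ) : ℝ) * eval x p = -eval x p
  simp

@[simp]
theorem eval_sub : eval x (p - q) = eval x p - eval x q := by
  change eval x (p + -q) = _
  rw [eval_add, eval_neg, sub_eq_add_neg]

@[simp]
theorem eval_pow (n : ℕ) : eval x (p ^ n) = eval x p ^ n := by
  induction n with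
  | zero => exact (Rat.cast_natCast 1).trans (by simp)
  | succ n ih => rw [pow_succ, ← ih]; rfl

end eval

variable [Fintype ι] [DecidableEq ι]

/-- The Taylor model of a polynomial expression at `c` on the ball of radius `r`, computed by
recursion on the expression. -/
def taylorModel (c : ι → ℚ) (r : ℚ) : PolyExpr ι → TaylorModel ι
  | const q => .const q
  | var i => .coord c i
  | add p q => (p.taylorModel c r).add (q.taylorModel c r)
  | mul p q => (p.taylorModel c r).mul r (q.taylorModel c r)

theorem taylorModel_encloses (c : ι → ℚ) {r : ℚ} (hr : 0 ≤ r) (p : PolyExpr ι) :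
    (p.taylorModel c r).Encloses (fun i ↦ c i) r fun x ↦ p.eval x := by
  induction p with
  | const q => exact TaylorModel.encloses_const _ _ q
  | var i => exact TaylorModel.encloses_coord c r i
  | add p q hp hq => exact hp.add hq
  | mul p q hp hq => exact hp.mul hr hq

end PolyExpr

namespace F4

open PolyExpr

/-- The system `g0 = g1 = g2 = g3 = g4 = 0` as polynomial expressions; the variables
`u0, u1, u2, x2, x3` are numbered from `0` to `4`. -/
def einsteinSystem : Fin 5 → PolyExpr (Fin 5) :=
  let u0 := var 0
  let u1 := var 1
  let u2 := var 2
  let x2 := var 3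
  let x3 := var 4
  ![2 * u0 * u1 * x2 ^ 2 * x3 ^ 2 + 3 * u0 * u1 * x2 ^ 2 + 4 * u0 * u1 * x3 ^ 2
      - 6 * u1 ^ 2 * x2 ^ 2 * x3 ^ 2 - u1 ^ 2 * x2 ^ 2 - 2 * x2 ^ 2 * x3 ^ 2,
    12 * u1 ^ 2 * u2 * x2 ^ 2 * x3 ^ 2 + 2 * u1 ^ 2 * u2 * x2 ^ 2
      - 10 * u1 * u2 ^ 2 * x2 ^ 2 * x3 ^ 2 - 5 * u1 * u2 ^ 2 * x3 ^ 2
      - 3 * u1 * x2 ^ 2 * x3 ^ 2 + 4 * u2 * x2 ^ 2 * x3 ^ 2,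
    u0 * u2 * x2 ^ 2 * x3 + 9 * u1 * u2 * x2 ^ 2 * x3 + 50 * u2 ^ 2 * x2 ^ 2 * x3
      + 15 * u2 ^ 2 * x3 + 18 * u2 * x2 ^ 3 * x3 + 6 * u2 * x2 ^ 3 - 108 * u2 * x2 ^ 2 * x3
      + 6 * u2 * x2 * x3 ^ 2 - 6 * u2 * x2 + 9 * x2 ^ 2 * x3,
    -u0 * x2 ^ 2 * x3 + 4 * u0 * x3 - 9 * u1 * x2 ^ 2 * x3 - 20 * u2 * x2 ^ 2 * x3
      + 20 * u2 * x3 - 36 * x2 ^ 3 * x3 - 18 * x2 ^ 3 + 108 * x2 ^ 2 * x3 + 6 * x2 * x3 ^ 2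
      - 72 * x2 * x3 + 18 * x2,
    9 * u0 * x2 ^ 2 - 4 * u0 * x3 ^ 2 + 9 * u1 * x2 ^ 2 - 20 * u2 * x3 ^ 2
      + 18 * x2 ^ 3 * x3 ^ 2 + 48 * x2 ^ 3 * x3 - 108 * x2 ^ 2 * x3 - 48 * x2 * x3 ^ 3
      + 72 * x2 * x3 ^ 2 + 24 * x2 * x3]

theorem eval_einsteinSystem (x : Fin 5 → ℝ) (i : Fin 5) :
    (einsteinSystem i).eval x =
      ![g0, g1, g2, g3, g4] i (x 0) (x 1) (x 2) (x 3) (x 4) := by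
  fin_cases i <;> simp [einsteinSystem, g0, g1, g2, g3, g4]

/-- Numerical solutions of the Einstein equation, rounded to six decimals. -/
def approxSolution : Fin 5 → Fin 5 → ℚ
  | 0 => ![0.269674, 0.211269, 0.114479, 1.003927, 0.255949]
  | 1 => ![0.546756, 0.282468, 1.171599, 1.022763, 0.492804]
  | 2 => ![0.726606, 0.143287, 0.113409, 0.498413, 1.106068]
  | 3 => ![1.361335, 1.44961, 0.155826, 0.954159, 1.384905]
  | 4 => ![2.494835, 0.252218, 0.177491, 1.74615, 2.475327]

/-- The inverse of the Jacobian of the Einstein equation at each numerical solution, rounded to a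
few decimals. -/
def approxInverseJacobian : Fin 5 → Matrix (Fin 5) (Fin 5) ℚ
  | 0 =>
    !![-1.951, 23.084, 0.41, 0.065, 0.266;
       1.823, -22.676, -0.412, -0.048, -0.144;
       -0.024, 0.082, -0.053, -0.003, 0.002;
       -0.327, 3.077, 0.055, -0.027, 0.029;
       -1.81, 9.179, 0.16, 0.032, 0.145]
  | 1 =>
    !![-0.647, 0.388, 0.041, 0.093, 0.2;
       0.221, -0.408, -0.017, -0.022, -0.029;
       0.071, 0.048, 0.028, -0.002, -0.013;
       -0.142, 0.056, 0.005, -0.01, 0.023;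
       -0.961, 0.032, 0.021, 0.061, 0.136]
  | 2 =>
    !![0.716, 2.996, 0.246, 0.08, -0.007;
       -0.006, -1.171, -0.061, 0.001, -0.002;
       0.003, -0.006, -0.054, -0.001, -0.001;
       -0.185, -0.933, -0.012, 0.038, -0.004;
       -0.039, -0.218, 0.025, -0.017, -0.039]
  | 3 =>
    !![-0.175, 1.449, 1.018, 1.002, 0.089;
       0.073, -0.265, -0.183, -0.332, -0.03;
       -0.008, 0.052, 0.02, 0.035, 0.003;
       -0.154, 0.908, 0.636, 0.687, 0.063;
       -0.136, 0.819, 0.581, 0.609, 0.044]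
  | 4 =>
    !![0.0534, 0.1649, 0.0383, -0.0025, -0.0005;
       0.0005, -0.0221, -0.0046, -0.001, -0.0001;
       0.0003, 0.0009, -0.0028, -0.0006, -0.0001;
       0.0005, 0.0124, 0.005, -0.0061, -0.0006;
       0.0012, 0.0228, 0.0101, -0.0114, -0.0029]

/-- The radius of the balls around the numerical solutions on which the Krawczyk test is run. -/
def searchRadius : ℚ := 1 / 10 ^ 5

theorem krawczykTest_approxSolution : ∀ n : Fin 5,
    TaylorModel.KrawczykTest
      (fun i ↦ (einsteinSystem i).taylorModel (approxSolution n) searchRadius)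
      searchRadius (approxInverseJacobian n) := by
  decide +kernel

theorem exists_einstein_solution_mem_box (n : Fin 5) (lo hi : Fin 5 → ℝ)
    (hbox : ∀ i, lo i < approxSolution n i - searchRadius ∧
      approxSolution n i + searchRadius < hi i) :
    ∃ u0 u1 u2 x2 x3 : ℝ,
      lo 0 < u0 ∧ u0 < hi 0 ∧ lo 1 < u1 ∧ u1 < hi 1 ∧ lo 2 < u2 ∧ u2 < hi 2 ∧
      lo 3 < x2 ∧ x2 < hi 3 ∧ lo 4 < x3 ∧ x3 < hi 4 ∧
      g0 u0 u1 u2 x2 x3 = 0 ∧ g1 u0 u1 u2 x2 x3 = 0 ∧ g2 u0 u1 u2 x2 x3 = 0 ∧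
      g3 u0 u1 u2 x2 x3 = 0 ∧ g4 u0 u1 u2 x2 x3 = 0 := by
  have hradius : 0 ≤ searchRadius := by norm_num [searchRadius]
  obtain ⟨x, hx, hzero⟩ := (krawczykTest_approxSolution n).exists_zero hradius
    fun i ↦ taylorModel_encloses (approxSolution n) hradius (einsteinSystem i)
  simp only [eval_einsteinSystem] at hzero
  have hdist (i : Fin 5) : |x i - approxSolution n i| ≤ searchRadius :=
    (dist_le_pi_dist x _ i).trans hx
  have hlo (i : Fin 5) : lo i < x i := by linarith [(hbox i).1, (abs_le.1 (hdist i)).1]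
  have hhi (i : Fin 5) : x i < hi i := by linarith [(hbox i).2, (abs_le.1 (hdist i)).2]
  exact ⟨x 0, x 1, x 2, x 3, x 4, hlo 0, hhi 0, hlo 1, hhi 1, hlo 2, hhi 2, hlo 3, hhi 3,
    hlo 4, hhi 4, hzero 0, hzero 1, hzero 2, hzero 3, hzero 4⟩

end F4

theorem stmt5 :
    (∃ u0 u1 u2 x2 x3 : ℝ,
      0.26 < u0 ∧ u0 < 0.27 ∧ 0.21 < u1 ∧ u1 < 0.22 ∧ 0.11 < u2 ∧ u2 < 0.12 ∧ 1.00 < x2 ∧ x2 < 1.01 ∧ 0.255 < x3 ∧ x3 < 0.256 ∧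
      g0 u0 u1 u2 x2 x3 = 0 ∧ g1 u0 u1 u2 x2 x3 = 0 ∧ g2 u0 u1 u2 x2 x3 = 0 ∧ g3 u0 u1 u2 x2 x3 = 0 ∧ g4 u0 u1 u2 x2 x3 = 0) ∧
    (∃ u0 u1 u2 x2 x3 : ℝ,
      0.54 < u0 ∧ u0 < 0.55 ∧ 0.28 < u1 ∧ u1 < 0.29 ∧ 1.17 < u2 ∧ u2 < 1.18 ∧ 1.02 < x2 ∧ x2 < 1.03 ∧ 0.49 < x3 ∧ x3 < 0.50 ∧
      g0 u0 u1 u2 x2 x3 = 0 ∧ g1 u0 u1 u2 x2 x3 = 0 ∧ g2 u0 u1 u2 x2 x3 = 0 ∧ g3 u0 u1 u2 x2 x3 = 0 ∧ g4 u0 u1 u2 x2 x3 = 0) ∧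
    (∃ u0 u1 u2 x2 x3 : ℝ,
      0.72 < u0 ∧ u0 < 0.73 ∧ 0.14 < u1 ∧ u1 < 0.15 ∧ 0.11 < u2 ∧ u2 < 0.12 ∧ 0.49 < x2 ∧ x2 < 0.50 ∧ 1.10 < x3 ∧ x3 < 1.11 ∧
      g0 u0 u1 u2 x2 x3 = 0 ∧ g1 u0 u1 u2 x2 x3 = 0 ∧ g2 u0 u1 u2 x2 x3 = 0 ∧ g3 u0 u1 u2 x2 x3 = 0 ∧ g4 u0 u1 u2 x2 x3 = 0) ∧
    (∃ u0 u1 u2 x2 x3 : ℝ,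
      1.36 < u0 ∧ u0 < 1.37 ∧ 1.44 < u1 ∧ u1 < 1.45 ∧ 0.15 < u2 ∧ u2 < 0.16 ∧ 0.95 < x2 ∧ x2 < 0.96 ∧ 1.38 < x3 ∧ x3 < 1.39 ∧
      g0 u0 u1 u2 x2 x3 = 0 ∧ g1 u0 u1 u2 x2 x3 = 0 ∧ g2 u0 u1 u2 x2 x3 = 0 ∧ g3 u0 u1 u2 x2 x3 = 0 ∧ g4 u0 u1 u2 x2 x3 = 0) ∧
    (∃ u0 u1 u2 x2 x3 : ℝ,
      2.49 < u0 ∧ u0 < 2.50 ∧ 0.25 < u1 ∧ u1 < 0.26 ∧ 0.17 < u2 ∧ u2 < 0.18 ∧ 1.74 < x2 ∧ x2 < 1.75 ∧ 2.47 < x3 ∧ x3 < 2.48 ∧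
      g0 u0 u1 u2 x2 x3 = 0 ∧ g1 u0 u1 u2 x2 x3 = 0 ∧ g2 u0 u1 u2 x2 x3 = 0 ∧ g3 u0 u1 u2 x2 x3 = 0 ∧ g4 u0 u1 u2 x2 x3 = 0) := by
  refine
    ⟨F4.exists_einstein_solution_mem_box 0
        ![0.26, 0.21, 0.11, 1.00, 0.255] ![0.27, 0.22, 0.12, 1.01, 0.256] ?_,
      F4.exists_einstein_solution_mem_box 1
        ![0.54, 0.28, 1.17, 1.02, 0.49] ![0.55, 0.29, 1.18, 1.03, 0.50] ?_,
      F4.exists_einstein_solution_mem_box 2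
        ![0.72, 0.14, 0.11, 0.49, 1.10] ![0.73, 0.15, 0.12, 0.50, 1.11] ?_,
      F4.exists_einstein_solution_mem_box 3
        ![1.36, 1.44, 0.15, 0.95, 1.38] ![1.37, 1.45, 0.16, 0.96, 1.39] ?_,
      F4.exists_einstein_solution_mem_box 4
        ![2.49, 0.25, 0.17, 1.74, 2.47] ![2.50, 0.26, 0.18, 1.75, 2.48] ?_⟩ <;>
    norm_num [Fin.forall_fin_succ, F4.approxSolution, F4.searchRadius]
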